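/- Let Δ = (E,H) with E,H ∈ ℝ^{l×n} and let 𝒱* be the limit of the first Wong sequence of Δ. Then 𝒱* is the maximal invariant subspace ℳ* of Δ: 𝒱* is an invariant subspace of Δ, and every invariant subspace M of Δ satisfies M ⊆ 𝒱*. -/

import Mathlib

noncomputable section

open Matrix

/-- A solution of the DAE `E ẋ = H x`. -/
def IsSolution {l n : ℕ} (E H : Matrix (Fin l) (Fin n) ℝ)
    (x : ℝ → (Fin n → ℝ)) : Prop :=
  Differentiable ℝ x ∧ ∀ t : ℝ, E.mulVec (deriv x t) = H.mulVec (x t)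

/-- `M` is an invariant subspace of the DAE `E ẋ = H x`. -/
def IsInvariantSubspace {l n : ℕ} (E H : Matrix (Fin l) (Fin n) ℝ)
    (M : Submodule ℝ (Fin n → ℝ)) : Prop :=
  ∀ x0 ∈ M, ∃ x : ℝ → (Fin n → ℝ),
    IsSolution E H x ∧ x 0 = x0 ∧ ∀ t : ℝ, x t ∈ M

/-- The first Wong sequence of the DAE `(E,H)`: `𝒱₀ = ⊤`, `𝒱_{i+1} = H⁻¹(E 𝒱_i)`;
its limit is `𝒱* = 𝒱_n`. -/
def wongV {L N : Type*} [Fintype L] [Fintype N] (E H : Matrix L N ℝ) :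
    ℕ → Submodule ℝ (N → ℝ)
  | 0 => ⊤
  | i + 1 => Submodule.comap H.mulVecLin (Submodule.map E.mulVecLin (wongV E H i))

theorem wongV_antitone {L N : Type*} [Fintype L] [Fintype N] (E H : Matrix L N ℝ) :
    Antitone (wongV E H) := by
  refine antitone_nat_of_succ_le fun i => ?_
  induction i with
  | zero => exact le_top
  | succ i ih => exact Submodule.comap_mono (Submodule.map_mono ih)

theorem wongV_succ_eq_or_finrank_add_le {L N : Type*} [Fintype L] [Fintype N]
    (E H : Matrix L N ℝ) (i : ℕ) :
    wongV E H (i + 1) = wongV E H i ∨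
      Module.finrank ℝ (wongV E H (i + 1)) + (i + 1) ≤ Fintype.card N := by
  induction i with
  | zero =>
    refine or_iff_not_imp_left.mpr fun h => ?_
    have hlt := Submodule.finrank_lt_finrank_of_lt
      ((wongV_antitone E H (Nat.le_succ 0)).lt_of_ne h)
    have htop : Module.finrank ℝ (wongV E H 0) = Fintype.card N := by
      rw [wongV, finrank_top, Module.finrank_fintype_fun_eq_card]
    simp only [Nat.succ_eq_add_one] at hlt
    omega
  | succ i ih =>
    rcases ih with ih | ih
    · left
      conv_lhs => rw [wongV, ih]
      rfl
    · refine or_iff_not_imp_left.mpr fun h => ?_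
      have hlt := Submodule.finrank_lt_finrank_of_lt
        ((wongV_antitone E H (Nat.le_succ (i + 1))).lt_of_ne h)
      simp only [Nat.succ_eq_add_one] at hlt
      omega

/-- The first Wong sequence is stationary from the index `card N` on. -/
theorem wongV_card_succ {L N : Type*} [Fintype L] [Fintype N] (E H : Matrix L N ℝ) :
    wongV E H (Fintype.card N + 1) = wongV E H (Fintype.card N) :=
  (wongV_succ_eq_or_finrank_add_le E H _).resolve_right (by omega)

theorem le_wongV {L N : Type*} [Fintype L] [Fintype N] {E H : Matrix L N ℝ}
    {M : Submodule ℝ (N → ℝ)} (hM : M ≤ (M.map E.mulVecLin).comap H.mulVecLin) (i : ℕ) :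
    M ≤ wongV E H i := by
  induction i with
  | zero => exact le_top
  | succ i ih => exact hM.trans (Submodule.comap_mono (Submodule.map_mono ih))

/-- If `H M ⊆ E M`, then `H` restricted to `M` factors through `E` by an endomorphism of `M`. -/
theorem exists_end_of_le_comap_map {K V W : Type*} [Field K] [AddCommGroup V] [Module K V]
    [AddCommGroup W] [Module K W] {E H : V →ₗ[K] W} {M : Submodule K V}
    (hM : M ≤ (M.map E).comap H) :
    ∃ A : M →ₗ[K] M, ∀ v : M, E (A v) = H v := by
  obtain ⟨g, hg⟩ := (E.submoduleMap M).exists_rightInverse_of_surjective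
    (LinearMap.range_eq_top.mpr (E.submoduleMap_surjective M))
  refine ⟨g ∘ₗ H.restrict hM, fun v => ?_⟩
  exact congrArg Subtype.val (LinearMap.congr_fun hg (H.restrict hM v))

theorem deriv_mem_of_forall_mem {F : Type*} [NormedAddCommGroup F] [NormedSpace ℝ F]
    {M : Submodule ℝ F} (hM : IsClosed (M : Set F)) {x : ℝ → F} (hx : ∀ t, x t ∈ M) (t : ℝ) :
    deriv x t ∈ M := by
  have hmem := range_deriv_subset_closure_span_image x dense_univ (Set.mem_range_self t)
  refine closure_minimal ?_ hM hmem
  exact Submodule.span_le.mpr (by rintro _ ⟨s, -, rfl⟩; exact hx s)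

theorem IsInvariantSubspace.le_comap_map {l n : ℕ} {E H : Matrix (Fin l) (Fin n) ℝ}
    {M : Submodule ℝ (Fin n → ℝ)} (hM : IsInvariantSubspace E H M) :
    M ≤ (M.map E.mulVecLin).comap H.mulVecLin := by
  intro x0 hx0
  obtain ⟨x, ⟨-, hx⟩, rfl, hxM⟩ := hM x0 hx0
  exact ⟨deriv x 0, deriv_mem_of_forall_mem M.closed_of_finiteDimensional hxM 0, hx 0⟩

/-- The linear ODE `ẏ = B y` has a global solution through every point. -/
theorem exists_forall_hasDerivAt_clm {F : Type*} [NormedAddCommGroup F] [NormedSpace ℝ F]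
    [CompleteSpace F] (B : F →L[ℝ] F) (y0 : F) :
    ∃ y : ℝ → F, y 0 = y0 ∧ ∀ t, HasDerivAt y (B (y t)) t := by
  refine ⟨fun t => NormedSpace.exp (t • B) y0, by simp, fun t => ?_⟩
  have h := (hasDerivAt_exp_smul_const' B t).clm_apply (hasDerivAt_const t y0)
  simpa using h

theorem isInvariantSubspace_of_le_comap_map {l n : ℕ} {E H : Matrix (Fin l) (Fin n) ℝ}
    {M : Submodule ℝ (Fin n → ℝ)} (hM : M ≤ (M.map E.mulVecLin).comap H.mulVecLin) :
    IsInvariantSubspace E H M := by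
  intro x0 hx0
  obtain ⟨A, hA⟩ := exists_end_of_le_comap_map hM
  obtain ⟨y, hy0, hy⟩ :=
    exists_forall_hasDerivAt_clm (LinearMap.toContinuousLinearMap A) ⟨x0, hx0⟩
  have hy (t : ℝ) : HasDerivAt (fun t => (y t : Fin n → ℝ)) (A (y t)) t :=
    M.subtypeL.hasFDerivAt.comp_hasDerivAt t (hy t)
  refine ⟨fun t => y t, ⟨fun t => (hy t).differentiableAt, fun t => ?_⟩, by simp [hy0],
    fun t => (y t).2⟩
  rw [(hy t).deriv]
  exact hA (y t)

/-- The limit `𝒱*` of the first Wong sequence is the maximal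
invariant subspace of `Δ = (E,H)`. -/
theorem stmt13 {l n : ℕ} (E H : Matrix (Fin l) (Fin n) ℝ) :
    IsInvariantSubspace E H (wongV E H n) ∧
    (∀ M : Submodule ℝ (Fin n → ℝ), IsInvariantSubspace E H M → M ≤ wongV E H n) := by
  refine ⟨isInvariantSubspace_of_le_comap_map ?_, fun M hM => le_wongV hM.le_comap_map n⟩
  have h := wongV_card_succ E H
  rw [Fintype.card_fin] at h
  exact h.ge
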